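/- Let ℬ ⊆ 𝒜 be a unital *-subalgebra and d ≥ 1. For 1 ≤ i, j ≤ d let x_ij, y_ij ∈ 𝒜 be self-adjoint, standard semicircular in moments, and set c_ij := (x_ij + i·y_ij)/√2 (so each c_ij is circular of variance 1). Assume the family of sets {x_ij} (1 ≤ i,j ≤ d), {y_ij} (1 ≤ i,j ≤ d), ℬ is free with respect to φ. Put C := (c_ij)_{i,j=1}^{d} ∈ M_d(𝒜), S₁ := (C + C*)/√(2d) and S₂ := (C − C*)/(i·√(2d)). Then S₁ and S₂ are self-adjoint and standard semicircular in moments with respect to φ_d, the sets {S₁}, {S₂}, M_d(ℬ) are free with respect to φ_d; in particular C is a circular element of variance d in M_d(𝒜) and {C, C*} is free from M_d(ℬ). (Proposition 5.3, 1°.) -/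

import Mathlib

open scoped BigOperators
open ComplexOrder

noncomputable section

variable {A : Type*} [Ring A] [Algebra ℂ A] [StarRing A] [StarModule ℂ A]

/-- Freeness of a family of subsets of `T` with respect to a state `φ`. -/
def AreFree {T : Type*} [Ring T] [Algebra ℂ T] {ι : Type*} (φ : T → ℂ) (S : ι → Set T) :
    Prop :=
  ∀ (n : ℕ) (t : Fin (n + 1) → ι) (z : Fin (n + 1) → T),
    (∀ m, z m ∈ Algebra.adjoin ℂ (S (t m))) →
    (∀ m, φ (z m) = 0) →
    (∀ m : Fin n, t m.castSucc ≠ t m.succ) →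
    φ ((List.ofFn z).prod) = 0

/-- `s` is standard semicircular in moments with respect to the state `φ`:
`φ(s^{2m}) = Cₘ` and `φ(s^{2m+1}) = 0`. -/
def SemicircMoments {T : Type*} [Monoid T] (φ : T → ℂ) (s : T) : Prop :=
  ∀ m : ℕ, φ (s ^ (2 * m)) = catalan m ∧ φ (s ^ (2 * m + 1)) = 0

/-- `(x + i y)/√2`: the circular element built from `x` and `y`. -/
def circ (x y : A) : A := ((Real.sqrt 2 : ℂ))⁻¹ • (x + Complex.I • y)

/-- The normalized trace `φ_d = tr ⊗ φ` on `M_d(𝒜)`. -/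
def phid {d : ℕ} (φ : A →ₗ[ℂ] ℂ) (X : Matrix (Fin d) (Fin d) A) : ℂ :=
  (∑ i, φ (X i i)) / d

/-!
Let `∂_q` be the free difference quotient with respect to the letter `q`. A family of standard
semicircular elements `s_q`, free among themselves and from a coefficient algebra, is characterised
by the Schwinger–Dyson equations `φ(b s_q f) = (φ ⊗ φ(b ·))(∂_q f)`, for coefficients `b` and
noncommutative polynomials `f`: evaluating both sides on alternating centred products yields the
equations, and conversely the equations give the moments of each `s_q` and, by induction on the
number of factors, the vanishing of alternating centred products.

The entries of `S₁` and `S₂` are linear combinations of the free semicircular elements `x_ij`,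
`y_ij`, and the only nonzero covariances, all equal to `1 / d`, are those of the `(i, j)` and
`(j, i)` entries of the same matrix. By the chain rule for free difference quotients, summation
over matrix indices turns the equations for the entries into the same equations for `S₁`, `S₂` with
respect to `φ_d`, with coefficients in `M_d(ℬ)`.
-/

open scoped TensorProduct

section LabelledProd

variable {T κ : Type*} [Monoid T]

/-- The product of the second components, for a list of algebra elements labelled by the
subalgebra they are taken from. -/
def labelledProd (L : List (κ × T)) : T := (L.map Prod.snd).prod

@[simp] lemma labelledProd_nil : labelledProd ([] : List (κ × T)) = 1 := rfl

@[simp] lemma labelledProd_cons (a : κ × T) (L : List (κ × T)) :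
    labelledProd (a :: L) = a.2 * labelledProd L := List.prod_cons

lemma labelledProd_append (L L' : List (κ × T)) :
    labelledProd (L ++ L') = labelledProd L * labelledProd L' := by simp [labelledProd]

lemma labelledProd_concat (L : List (κ × T)) (a : κ × T) :
    labelledProd (L ++ [a]) = labelledProd L * a.2 := by simp [labelledProd]

end LabelledProd

section Freeness

variable {T κ : Type*} [Ring T] [Algebra ℂ T]

/-- The labelled lists `(k₁, z₁), …, (kₙ, zₙ)` of centred elements `zₘ` of the algebras generated
by `S kₘ`, consecutive labels being different: the test products in the definition of freeness. -/
structure IsAlternatingCentered (ψ : T → ℂ) (S : κ → Set T) (L : List (κ × T)) : Prop where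
  isChain : (L.map Prod.fst).IsChain (· ≠ ·)
  mem_adjoin : ∀ a ∈ L, a.2 ∈ Algebra.adjoin ℂ (S a.1)
  map_eq_zero : ∀ a ∈ L, ψ a.2 = 0

namespace IsAlternatingCentered

variable {ψ : T → ℂ} {S : κ → Set T} {L L' : List (κ × T)} {a : κ × T} {k : κ} {z : T}

lemma nil : IsAlternatingCentered ψ S [] := ⟨by simp, by simp, by simp⟩

lemma tail (h : IsAlternatingCentered ψ S (a :: L)) : IsAlternatingCentered ψ S L :=
  ⟨h.isChain.tail, fun b hb => h.mem_adjoin b (List.mem_cons_of_mem a hb),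
    fun b hb => h.map_eq_zero b (List.mem_cons_of_mem a hb)⟩

lemma left_of_append (h : IsAlternatingCentered ψ S (L ++ L')) : IsAlternatingCentered ψ S L :=
  ⟨by
    have hchain := h.isChain
    rw [List.map_append] at hchain
    exact hchain.left_of_append, fun b hb => h.mem_adjoin b (List.mem_append_left L' hb),
    fun b hb => h.map_eq_zero b (List.mem_append_left L' hb)⟩

lemma cons (h : IsAlternatingCentered ψ S L) (hchain : (k :: L.map Prod.fst).IsChain (· ≠ ·))
    (hz : z ∈ Algebra.adjoin ℂ (S k)) (hz₀ : ψ z = 0) :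
    IsAlternatingCentered ψ S ((k, z) :: L) :=
  ⟨hchain, List.forall_mem_cons.2 ⟨hz, h.mem_adjoin⟩, List.forall_mem_cons.2 ⟨hz₀, h.map_eq_zero⟩⟩

lemma concat (h : IsAlternatingCentered ψ S L)
    (hchain : (L.map Prod.fst ++ [k]).IsChain (· ≠ ·))
    (hz : z ∈ Algebra.adjoin ℂ (S k)) (hz₀ : ψ z = 0) :
    IsAlternatingCentered ψ S (L ++ [(k, z)]) := by
  refine ⟨by simpa using hchain, fun b hb => ?_, fun b hb => ?_⟩ <;>
    rcases List.mem_append.1 hb with hb | hb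
  · exact h.mem_adjoin b hb
  · obtain rfl := List.mem_singleton.1 hb
    exact hz
  · exact h.map_eq_zero b hb
  · obtain rfl := List.mem_singleton.1 hb
    exact hz₀

lemma exists_eq_cons_or_isChain_cons (h : IsAlternatingCentered ψ S L) (k : κ) :
    (∃ z L', L = (k, z) :: L') ∨ (k :: L.map Prod.fst).IsChain (· ≠ ·) := by
  rcases L with _ | ⟨⟨j, z⟩, L⟩
  · exact Or.inr (List.isChain_singleton k)
  · rcases eq_or_ne k j with rfl | hkj
    · exact Or.inl ⟨z, L, rfl⟩
    · exact Or.inr (List.isChain_cons_cons.2 ⟨hkj, h.isChain⟩)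

end IsAlternatingCentered

lemma AreFree.map_labelledProd_eq_zero {ψ : T → ℂ} {S : κ → Set T} (hfree : AreFree ψ S)
    {L : List (κ × T)} (hL : IsAlternatingCentered ψ S L) (hne : L ≠ []) :
    ψ (labelledProd L) = 0 := by
  obtain ⟨n, hn⟩ := Nat.exists_eq_succ_of_ne_zero (List.length_pos_iff.2 hne).ne'
  have hprod := hfree n (fun m => (L[(m : ℕ)]'(by omega)).1) (fun m => (L[(m : ℕ)]'(by omega)).2)
    (fun m => hL.mem_adjoin _ (List.getElem_mem _))
    (fun m => hL.map_eq_zero _ (List.getElem_mem _))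
    (fun m => by
      have hne := List.isChain_iff_getElem.1 hL.isChain m (by simp; omega)
      simpa using hne)
  have hofFn : List.ofFn (fun m : Fin (n + 1) => (L[(m : ℕ)]'(by omega)).2) = L.map Prod.snd :=
    List.ext_getElem (by simp [hn]) fun i _ _ => by
      simp only [List.getElem_ofFn, List.getElem_map]
  rwa [hofFn] at hprod

lemma areFree_of_map_labelledProd_eq_zero {ψ : T → ℂ} {S : κ → Set T}
    (h : ∀ L, IsAlternatingCentered ψ S L → L ≠ [] → ψ (labelledProd L) = 0) : AreFree ψ S := by
  intro n t z hz hz₀ ht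
  have halt : IsAlternatingCentered ψ S (List.ofFn fun m => (t m, z m)) := by
    refine ⟨List.isChain_iff_getElem.2 fun i hi => ?_, fun a ha => ?_, fun a ha => ?_⟩
    · simp only [List.length_map, List.length_ofFn] at hi
      simp only [List.getElem_ofFn, List.getElem_map]
      exact ht ⟨i, by omega⟩
    · obtain ⟨m, rfl⟩ := (List.mem_ofFn' _ _).1 ha
      exact hz m
    · obtain ⟨m, rfl⟩ := (List.mem_ofFn' _ _).1 ha
      exact hz₀ m
  simpa [labelledProd, List.map_ofFn, Function.comp_def] using h _ halt (by simp)

lemma AreFree.of_subset_adjoin {ψ : T → ℂ} {S : κ → Set T} (hfree : AreFree ψ S) {κ' : Type*}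
    {e : κ' → κ} (he : Function.Injective e) {S' : κ' → Set T}
    (hS : ∀ k, S' k ⊆ Algebra.adjoin ℂ (S (e k))) : AreFree ψ S' :=
  fun n t z hz hz₀ ht => hfree n (e ∘ t) z
    (fun m => Algebra.adjoin_le (hS (t m)) (hz m)) hz₀ fun m => he.ne (ht m)

lemma areFree_image_iff {T' : Type*} [Ring T'] [Algebra ℂ T'] (f : T →ₐ[ℂ] T') (φ : T' → ℂ)
    (S : κ → Set T) : AreFree φ (fun k => f '' S k) ↔ AreFree (φ ∘ f) S := by
  have hprod (n : ℕ) (z : Fin (n + 1) → T) :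
      f (List.ofFn z).prod = (List.ofFn (f ∘ z)).prod := by
    rw [map_list_prod, List.map_ofFn]
  constructor
  · intro h n t z hz hz₀ ht
    rw [Function.comp_apply, hprod]
    refine h n t (f ∘ z) (fun m => ?_) hz₀ ht
    rw [← AlgHom.map_adjoin]
    exact Subalgebra.mem_map.2 ⟨z m, hz m, rfl⟩
  · intro h n t z hz hz₀ ht
    simp only [← AlgHom.map_adjoin] at hz
    choose w hw hwz using fun m => Subalgebra.mem_map.1 (hz m)
    obtain rfl : f ∘ w = z := funext hwz
    rw [← hprod]
    exact h n t w hw hz₀ ht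

end Freeness

section Centering

variable {T κ : Type*} [Ring T] [Algebra ℂ T]

/-- The centred part `u - ψ(u) 1` of `u`. -/
def centering (ψ : T →ₗ[ℂ] ℂ) (u : T) : T := u - ψ u • 1

variable {ψ : T →ₗ[ℂ] ℂ}

lemma map_centering (hψ : ψ 1 = 1) (u : T) : ψ (centering ψ u) = 0 := by
  simp [centering, hψ]

lemma centering_mem {R : Subalgebra ℂ T} {u : T} (hu : u ∈ R) : centering ψ u ∈ R :=
  R.sub_mem hu (R.smul_mem R.one_mem _)

lemma centering_mul_eq (u p : T) : centering ψ u * p + ψ u • p = u * p := by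
  simp [centering, sub_mul]

lemma mul_centering_eq (p u : T) : p * centering ψ u + ψ u • p = p * u := by
  simp [centering, mul_sub]

variable {S : κ → Set T} {L : List (κ × T)} {j k : κ}

lemma AreFree.map_mul_mul_labelledProd (hfree : AreFree ψ S) (hψ : ψ 1 = 1)
    {b u : T} (hb : b ∈ Algebra.adjoin ℂ (S j)) (hu : u ∈ Algebra.adjoin ℂ (S k)) (hjk : j ≠ k)
    (hL : IsAlternatingCentered ψ S L) (hchain : (k :: L.map Prod.fst).IsChain (· ≠ ·)) :
    ψ (b * (u * labelledProd L)) = ψ u * ψ (b * labelledProd L) := by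
  have hu₀ := hL.cons hchain (centering_mem hu) (map_centering hψ u)
  have hbu₀ := hu₀.cons (List.isChain_cons_cons.2 ⟨hjk, hchain⟩) (centering_mem hb)
    (map_centering hψ b)
  have hzero := hfree.map_labelledProd_eq_zero hu₀ (List.cons_ne_nil _ _)
  have hzero' := hfree.map_labelledProd_eq_zero hbu₀ (List.cons_ne_nil _ _)
  simp only [labelledProd_cons] at hzero hzero'
  have hcentre : ψ (b * (centering ψ u * labelledProd L)) = 0 := by
    rw [← centering_mul_eq (ψ := ψ) b, map_add, map_smul, hzero, hzero', smul_zero, add_zero]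
  rw [← centering_mul_eq (ψ := ψ) u, mul_add, map_add, hcentre, mul_smul_comm, map_smul, zero_add,
    smul_eq_mul]

lemma AreFree.map_labelledProd_mul_eq_zero (hfree : AreFree ψ S) (hψ : ψ 1 = 1)
    (hL : IsAlternatingCentered ψ S L) (hne : L ≠ [])
    (hchain : (L.map Prod.fst ++ [k]).IsChain (· ≠ ·))
    {u : T} (hu : u ∈ Algebra.adjoin ℂ (S k)) : ψ (labelledProd L * u) = 0 := by
  have hzero := hfree.map_labelledProd_eq_zero
    (hL.concat hchain (centering_mem hu) (map_centering hψ u)) (by simp)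
  rw [labelledProd_concat] at hzero
  rw [← mul_centering_eq (ψ := ψ), map_add, map_smul, hzero, hfree.map_labelledProd_eq_zero hL hne,
    smul_zero, add_zero]

end Centering

section Span

lemma adjoin_induction_left {R T : Type*} [CommSemiring R] [Semiring T] [Algebra R T] {s : Set T}
    {p : T → Prop} (one : p 1) (add : ∀ u v, p u → p v → p (u + v))
    (smul : ∀ (r : R) u, p u → p (r • u))
    (mul : ∀ x ∈ s, ∀ u ∈ Algebra.adjoin R s, p u → p (x * u)) {u : T}
    (hu : u ∈ Algebra.adjoin R s) : p u := by
  have hmonoid : ∀ w ∈ Submonoid.closure s, p w ∧ w ∈ Algebra.adjoin R s := by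
    intro w hw
    induction hw using Submonoid.closure_induction_left with
    | one => exact ⟨one, one_mem _⟩
    | mul_left x hx y _ ih =>
      exact ⟨mul x hx y ih.2 ih.1, mul_mem (Algebra.subset_adjoin hx) ih.2⟩
  rw [← Subalgebra.mem_toSubmodule, Algebra.adjoin_eq_span] at hu
  induction hu using Submodule.span_induction with
  | mem w hw => exact (hmonoid w hw).1
  | zero => simpa using smul 0 1 one
  | add u v _ _ hu hv => exact add u v hu hv
  | smul r u _ hu => exact smul r u hu

variable {T κ : Type*} [Ring T] [Algebra ℂ T] {ψ : T →ₗ[ℂ] ℂ} {S : κ → Set T}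

lemma IsAlternatingCentered.mul_labelledProd_mem_span (hψ : ψ 1 = 1) {L : List (κ × T)}
    (hL : IsAlternatingCentered ψ S L) {k : κ}
    (hchain : (k :: L.map Prod.fst).IsChain (· ≠ ·)) {u : T} (hu : u ∈ Algebra.adjoin ℂ (S k)) :
    u * labelledProd L ∈ Submodule.span ℂ (labelledProd '' {L | IsAlternatingCentered ψ S L}) := by
  rw [← centering_mul_eq (ψ := ψ)]
  refine add_mem (Submodule.subset_span ⟨(k, centering ψ u) :: L, ?_, labelledProd_cons _ _⟩)
    (Submodule.smul_mem _ _ (Submodule.subset_span ⟨L, hL, rfl⟩))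
  exact hL.cons hchain (centering_mem hu) (map_centering hψ u)

lemma span_labelledProd_isAlternatingCentered (hψ : ψ 1 = 1)
    (hS : Algebra.adjoin ℂ (⋃ k, S k) = ⊤) :
    Submodule.span ℂ (labelledProd '' {L | IsAlternatingCentered ψ S L}) = ⊤ := by
  set V := Submodule.span ℂ (labelledProd '' {L | IsAlternatingCentered ψ S L})
  suffices hmul : ∀ x ∈ ⋃ k, S k, ∀ p ∈ V, x * p ∈ V by
    refine eq_top_iff.2 fun f _ => ?_
    have hf : f ∈ Algebra.adjoin ℂ (⋃ k, S k) := hS ▸ Algebra.mem_top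
    exact adjoin_induction_left (p := (· ∈ V)) (Submodule.subset_span ⟨[], .nil, rfl⟩)
      (fun _ _ => add_mem) (fun r _ => V.smul_mem r) (fun x hx p _ => hmul x hx p) hf
  intro x hx p hp
  obtain ⟨k, hxk⟩ := Set.mem_iUnion.1 hx
  have hxS : x ∈ Algebra.adjoin ℂ (S k) := Algebra.subset_adjoin hxk
  induction hp using Submodule.span_induction with
  | mem p hp =>
    obtain ⟨L, hL, rfl⟩ := hp
    rcases hL.exists_eq_cons_or_isChain_cons k with ⟨z, L, rfl⟩ | hchain
    · have hz : z ∈ Algebra.adjoin ℂ (S k) := hL.mem_adjoin (k, z) List.mem_cons_self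
      rw [labelledProd_cons, ← mul_assoc]
      exact hL.tail.mul_labelledProd_mem_span hψ hL.isChain (mul_mem hxS hz)
    · exact hL.mul_labelledProd_mem_span hψ hchain hxS
  | zero => simp
  | add p q _ _ hp hq => simpa only [mul_add] using add_mem hp hq
  | smul r p _ hp => simpa only [mul_smul_comm] using V.smul_mem r hp

end Span

section FreeDifferenceQuotient

variable {Λ : Type*}

/-- The algebra homomorphism sending a letter `l` to `[[l ⊗ 1, c l • (1 ⊗ 1)], [0, 1 ⊗ l]]`. Its
upper right corner is a derivation into the bimodule `F ⊗ F`. -/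
def freeDifferenceQuotientHom (c : Λ → ℂ) : FreeAlgebra ℂ Λ →ₐ[ℂ]
    Matrix (Fin 2) (Fin 2) (FreeAlgebra ℂ Λ ⊗[ℂ] FreeAlgebra ℂ Λ) :=
  FreeAlgebra.lift ℂ fun l =>
    !![FreeAlgebra.ι ℂ l ⊗ₜ 1, c l • 1; 0, 1 ⊗ₜ FreeAlgebra.ι ℂ l]

lemma freeDifferenceQuotientHom_diagonal (c : Λ → ℂ) (f : FreeAlgebra ℂ Λ) :
    freeDifferenceQuotientHom c f 0 0 = f ⊗ₜ 1 ∧ freeDifferenceQuotientHom c f 1 0 = 0 ∧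
      freeDifferenceQuotientHom c f 1 1 = 1 ⊗ₜ f := by
  induction f using FreeAlgebra.induction with
  | grade0 r =>
    simp [Matrix.algebraMap_matrix_apply, Algebra.TensorProduct.algebraMap_apply,
      ← Algebra.TensorProduct.algebraMap_apply']
  | grade1 l => simp [freeDifferenceQuotientHom]
  | mul f g hf hg => simp [Matrix.mul_apply, Fin.sum_univ_two, hf, hg]
  | add f g hf hg => simp [hf, hg, TensorProduct.add_tmul, TensorProduct.tmul_add]

/-- Voiculescu's free difference quotient in the direction `c`: the derivation
`ℂ⟨Λ⟩ → ℂ⟨Λ⟩ ⊗ ℂ⟨Λ⟩` with `∂ l = c l • (1 ⊗ 1)` for every letter `l`. -/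
def freeDifferenceQuotient (c : Λ → ℂ) :
    FreeAlgebra ℂ Λ →ₗ[ℂ] FreeAlgebra ℂ Λ ⊗[ℂ] FreeAlgebra ℂ Λ :=
  Matrix.entryLinearMap ℂ _ 0 1 ∘ₗ (freeDifferenceQuotientHom c).toLinearMap

lemma freeDifferenceQuotient_algebraMap (c : Λ → ℂ) (r : ℂ) :
    freeDifferenceQuotient c (algebraMap ℂ _ r) = 0 := by
  simp [freeDifferenceQuotient, Matrix.algebraMap_matrix_apply]

lemma freeDifferenceQuotient_ι (c : Λ → ℂ) (l : Λ) :
    freeDifferenceQuotient c (FreeAlgebra.ι ℂ l) = c l • 1 := by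
  simp [freeDifferenceQuotient, freeDifferenceQuotientHom]

lemma freeDifferenceQuotient_mul (c : Λ → ℂ) (f g : FreeAlgebra ℂ Λ) :
    freeDifferenceQuotient c (f * g) =
      (f ⊗ₜ 1) * freeDifferenceQuotient c g + freeDifferenceQuotient c f * (1 ⊗ₜ g) := by
  simp [freeDifferenceQuotient, Matrix.mul_apply, Fin.sum_univ_two,
    freeDifferenceQuotientHom_diagonal]

lemma freeDifferenceQuotient_sum_smul {K : Type*} [Fintype K] (r : K → ℂ) (c : K → Λ → ℂ)
    (f : FreeAlgebra ℂ Λ) :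
    freeDifferenceQuotient (∑ k, r k • c k) f = ∑ k, r k • freeDifferenceQuotient (c k) f := by
  induction f using FreeAlgebra.induction with
  | grade0 s => simp [freeDifferenceQuotient_algebraMap]
  | grade1 l => simp [freeDifferenceQuotient_ι, smul_smul, Finset.sum_smul]
  | mul f g hf hg =>
    simp [freeDifferenceQuotient_mul, hf, hg, Finset.mul_sum, Finset.sum_mul,
      Finset.sum_add_distrib, mul_smul_comm, smul_mul_assoc]
  | add f g hf hg => simp [hf, hg, Finset.sum_add_distrib]

end FreeDifferenceQuotient

section Contraction

open Module (Dual)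
open Finset.HasAntidiagonal (antidiagonal)

variable {Λ : Type*} (c : Λ → ℂ) (α β : Dual ℂ (FreeAlgebra ℂ Λ))

/-- The functional `f ↦ (α ⊗ β)(∂ f)`, where `∂` is the free difference quotient in the
direction `c`. -/
def contraction : Dual ℂ (FreeAlgebra ℂ Λ) →ₗ[ℂ] Dual ℂ (FreeAlgebra ℂ Λ) →ₗ[ℂ]
    Dual ℂ (FreeAlgebra ℂ Λ) :=
  TensorProduct.curry ((freeDifferenceQuotient c).dualMap ∘ₗ TensorProduct.dualDistrib ℂ _ _)

lemma contraction_apply (f : FreeAlgebra ℂ Λ) :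
    contraction c α β f = TensorProduct.dualDistrib ℂ _ _ (α ⊗ₜ β) (freeDifferenceQuotient c f) :=
  rfl

lemma contraction_algebraMap (r : ℂ) : contraction c α β (algebraMap ℂ _ r) = 0 := by
  rw [contraction_apply, freeDifferenceQuotient_algebraMap, map_zero]

lemma contraction_one : contraction c α β 1 = 0 := by
  simpa using contraction_algebraMap c α β 1

lemma contraction_ι (l : Λ) : contraction c α β (FreeAlgebra.ι ℂ l) = c l * (α 1 * β 1) := by
  simp [contraction_apply, freeDifferenceQuotient_ι, Algebra.TensorProduct.one_def]

lemma dualDistrib_tmul_one_mul (f : FreeAlgebra ℂ Λ) (t : FreeAlgebra ℂ Λ ⊗[ℂ] FreeAlgebra ℂ Λ) :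
    TensorProduct.dualDistrib ℂ _ _ (α ⊗ₜ β) ((f ⊗ₜ 1) * t) =
      TensorProduct.dualDistrib ℂ _ _ ((α ∘ₗ LinearMap.mulLeft ℂ f) ⊗ₜ β) t := by
  induction t using TensorProduct.induction_on with
  | zero => simp
  | tmul u v => simp
  | add s t hs ht => rw [mul_add, map_add, map_add, hs, ht]

lemma dualDistrib_mul_one_tmul (g : FreeAlgebra ℂ Λ) (t : FreeAlgebra ℂ Λ ⊗[ℂ] FreeAlgebra ℂ Λ) :
    TensorProduct.dualDistrib ℂ _ _ (α ⊗ₜ β) (t * (1 ⊗ₜ g)) =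
      TensorProduct.dualDistrib ℂ _ _ (α ⊗ₜ (β ∘ₗ LinearMap.mulRight ℂ g)) t := by
  induction t using TensorProduct.induction_on with
  | zero => simp
  | tmul u v => simp
  | add s t hs ht => rw [add_mul, map_add, map_add, hs, ht]

lemma contraction_mul (f g : FreeAlgebra ℂ Λ) :
    contraction c α β (f * g) = contraction c (α ∘ₗ LinearMap.mulLeft ℂ f) β g +
      contraction c α (β ∘ₗ LinearMap.mulRight ℂ g) f := by
  simp only [contraction_apply, freeDifferenceQuotient_mul, map_add, dualDistrib_tmul_one_mul,
    dualDistrib_mul_one_tmul]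

lemma contraction_sum_smul {K : Type*} [Fintype K] (r : K → ℂ) (c : K → Λ → ℂ)
    (f : FreeAlgebra ℂ Λ) :
    contraction (∑ k, r k • c k) α β f = ∑ k, r k * contraction (c k) α β f := by
  simp only [contraction_apply, freeDifferenceQuotient_sum_smul, map_sum, map_smul, smul_eq_mul]

variable {c α β}

lemma contraction_ι_pow_succ {l : Λ} (hl : c l = 1) (n : ℕ) :
    contraction c α β (FreeAlgebra.ι ℂ l ^ (n + 1)) = ∑ p ∈ antidiagonal n,
      α (FreeAlgebra.ι ℂ l ^ p.1) * β (FreeAlgebra.ι ℂ l ^ p.2) := by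
  induction n generalizing α with
  | zero => simp [contraction_ι, hl]
  | succ n ih =>
    rw [pow_succ', contraction_mul, ih, contraction_ι, hl, Finset.Nat.sum_antidiagonal_succ]
    simp [← pow_succ', add_comm]

lemma contraction_congr {S : Set (FreeAlgebra ℂ Λ)} (hS : S ⊆ Set.range (FreeAlgebra.ι ℂ))
    {α' β' : Dual ℂ (FreeAlgebra ℂ Λ)}
    (h : ∀ u ∈ Algebra.adjoin ℂ S, ∀ v ∈ Algebra.adjoin ℂ S, α u * β v = α' u * β' v)
    {a : FreeAlgebra ℂ Λ} (ha : a ∈ Algebra.adjoin ℂ S) :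
    contraction c α β a = contraction c α' β' a := by
  induction ha using Algebra.adjoin_induction generalizing α β α' β' with
  | mem x hx =>
    obtain ⟨l, rfl⟩ := hS hx
    rw [contraction_ι, contraction_ι, h 1 (one_mem _) 1 (one_mem _)]
  | algebraMap r => rw [contraction_algebraMap, contraction_algebraMap]
  | add x y _ _ hx hy => rw [map_add, map_add, hx h, hy h]
  | mul x y hxS hyS hx hy =>
    rw [contraction_mul, contraction_mul,
      hx (α' := α') (β' := β' ∘ₗ LinearMap.mulRight ℂ y) fun u hu v hv => h u hu _ (mul_mem hv hyS),
      hy (α' := α' ∘ₗ LinearMap.mulLeft ℂ x) (β' := β') fun u hu v hv => h _ (mul_mem hxS hu) v hv]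

lemma contraction_eq_zero_of_map_eq_zero {S : Set (FreeAlgebra ℂ Λ)}
    (hS : S ⊆ Set.range (FreeAlgebra.ι ℂ)) (hα : ∀ u ∈ Algebra.adjoin ℂ S, α u = 0)
    {a : FreeAlgebra ℂ Λ} (ha : a ∈ Algebra.adjoin ℂ S) : contraction c α β a = 0 := by
  rw [contraction_congr hS (α' := 0) (β' := 0) (fun u hu v _ => by simp [hα u hu]) ha]
  simp

lemma contraction_eq_zero_of_direction_eq_zero {s : Set Λ} (hs : ∀ l ∈ s, c l = 0)
    {a : FreeAlgebra ℂ Λ} (ha : a ∈ Algebra.adjoin ℂ (FreeAlgebra.ι ℂ '' s)) :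
    contraction c α β a = 0 := by
  induction ha using Algebra.adjoin_induction generalizing α β with
  | mem x hx =>
    obtain ⟨l, hl, rfl⟩ := hx
    rw [contraction_ι, hs l hl, zero_mul]
  | algebraMap r => exact contraction_algebraMap c α β r
  | add x y _ _ hx hy => rw [map_add, hx, hy, add_zero]
  | mul x y _ _ hx hy => rw [contraction_mul, hx, hy, add_zero]

end Contraction

section SemicircularMoments

open Finset.HasAntidiagonal (antidiagonal mem_antidiagonal)

/-- The `n`-th moment of the standard semicircle law. -/
def semicircleMoment (n : ℕ) : ℂ := if Even n then catalan (n / 2) else 0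

lemma semicircleMoment_two_mul (n : ℕ) : semicircleMoment (2 * n) = catalan n := by
  simp [semicircleMoment]

lemma semicircleMoment_of_odd {n : ℕ} (hn : Odd n) : semicircleMoment n = 0 :=
  if_neg (Nat.not_even_iff_odd.2 hn)

lemma semicircleMoment_add_two (n : ℕ) : semicircleMoment (n + 2) =
    ∑ p ∈ antidiagonal n, semicircleMoment p.1 * semicircleMoment p.2 := by
  rcases Nat.even_or_odd' n with ⟨k, rfl | rfl⟩
  · rw [show 2 * k + 2 = 2 * (k + 1) by ring, semicircleMoment_two_mul, catalan_succ', Nat.cast_sum]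
    refine Finset.sum_of_injOn (fun p => (2 * p.1, 2 * p.2)) ?_ ?_ ?_ ?_
    · rintro ⟨i, j⟩ _ ⟨i', j'⟩ _ h
      simpa using h
    · rintro ⟨i, j⟩ hij
      simp only [Finset.mem_coe, mem_antidiagonal] at hij ⊢
      omega
    · rintro ⟨i, j⟩ hij hodd
      rw [mem_antidiagonal] at hij
      rcases Nat.even_or_odd' i with ⟨a, rfl | rfl⟩
      · refine absurd ⟨(a, k - a), ?_, ?_⟩ hodd
        · simp only [Finset.mem_coe, mem_antidiagonal]
          omega
        · exact Prod.ext rfl (by dsimp only at hij ⊢; omega)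
      · rw [semicircleMoment_of_odd (odd_two_mul_add_one a), zero_mul]
    · rintro ⟨i, j⟩ _
      simp [semicircleMoment_two_mul]
  · rw [semicircleMoment_of_odd (by use k + 1; ring)]
    refine (Finset.sum_eq_zero fun p hp => ?_).symm
    rw [mem_antidiagonal] at hp
    rcases Nat.even_or_odd p.1 with he | ho
    · rw [semicircleMoment_of_odd (n := p.2) (by grind), mul_zero]
    · rw [semicircleMoment_of_odd ho, zero_mul]

variable {T : Type*} [Monoid T] {φ : T → ℂ} {s : T}

lemma semicircMoments_iff_eq_semicircleMoment :
    SemicircMoments φ s ↔ ∀ n, φ (s ^ n) = semicircleMoment n := by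
  refine ⟨fun h n => ?_, fun h m => ⟨?_, ?_⟩⟩
  · rcases Nat.even_or_odd' n with ⟨m, rfl | rfl⟩
    · rw [(h m).1, semicircleMoment_two_mul]
    · rw [(h m).2, semicircleMoment_of_odd (odd_two_mul_add_one m)]
  · rw [h, semicircleMoment_two_mul]
  · rw [h, semicircleMoment_of_odd (odd_two_mul_add_one m)]

lemma semicircMoments_iff_recursion (hφ : φ 1 = 1) : SemicircMoments φ s ↔
    φ s = 0 ∧ ∀ n, φ (s ^ (n + 2)) = ∑ p ∈ antidiagonal n, φ (s ^ p.1) * φ (s ^ p.2) := by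
  rw [semicircMoments_iff_eq_semicircleMoment]
  constructor
  · intro h
    simp only [h, semicircleMoment_add_two, implies_true, and_true]
    simpa [semicircleMoment] using h 1
  · rintro ⟨hmean, hrec⟩ n
    induction n using Nat.strong_induction_on with
    | _ n ih =>
      match n with
      | 0 => simp [semicircleMoment, hφ]
      | 1 => simp [semicircleMoment, hmean]
      | n + 2 =>
        rw [hrec, semicircleMoment_add_two]
        refine Finset.sum_congr rfl fun p hp => ?_
        rw [mem_antidiagonal] at hp
        rw [ih p.1 (by omega), ih p.2 (by omega)]

end SemicircularMoments

section SchwingerDyson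

open Module (Dual)

variable {ι M κ : Type*}

/-- The values `v l` of the letters `l` of colour `j`: the letters `Sum.inl g` carry the colour
`col g`, the coefficient letters `Sum.inr m` share the colour `Sum.inr ()`. -/
def colorClass {T : Type*} (col : ι → κ) (v : ι ⊕ M → T) (j : κ ⊕ Unit) : Set T :=
  v '' (Sum.map col (fun _ => ()) ⁻¹' {j})

/-- The subalgebra of `ℂ⟨ι ⊕ M⟩` generated by the coefficient letters `Sum.inr m`. -/
def coefficientAlgebra (ι M : Type*) : Subalgebra ℂ (FreeAlgebra ℂ (ι ⊕ M)) :=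
  Algebra.adjoin ℂ (Set.range fun m => FreeAlgebra.ι ℂ (Sum.inr m))

lemma colorClass_inr {T : Type*} (col : ι → κ) (v : ι ⊕ M → T) :
    colorClass col v (Sum.inr ()) = Set.range fun m => v (Sum.inr m) := by
  ext t
  simp [colorClass]

lemma colorClass_id_inl {T : Type*} (v : ι ⊕ M → T) (g : ι) :
    colorClass id v (Sum.inl g) = {v (Sum.inl g)} := by
  ext t
  simp [colorClass, eq_comm]

lemma colorClass_subset_range {T : Type*} (col : ι → κ) (v : ι ⊕ M → T) (j : κ ⊕ Unit) :
    colorClass col v j ⊆ Set.range v := Set.image_subset_range _ _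

lemma iUnion_colorClass {T : Type*} (col : ι → κ) (v : ι ⊕ M → T) :
    ⋃ j, colorClass col v j = Set.range v := by
  ext t
  simp [colorClass]

lemma mem_adjoin_colorClass {T : Type*} [Semiring T] [Algebra ℂ T] (col : ι → κ)
    (v : ι ⊕ M → T) (g : ι) :
    v (Sum.inl g) ∈ Algebra.adjoin ℂ (colorClass col v (Sum.inl (col g))) :=
  Algebra.subset_adjoin ⟨Sum.inl g, rfl, rfl⟩

/-- The direction of the partial free difference quotient with respect to the letter
`Sum.inl g`. -/
abbrev letterDirection [DecidableEq ι] (g : ι) : ι ⊕ M → ℂ := Sum.elim (Pi.single g 1) 0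

/-- The Schwinger–Dyson equations characterising the joint law of a free standard semicircular
family that is free from the coefficients. For a non-tracial `ψ` a coefficient `b` to the
left of the semicircular letter cannot be moved to the right end, so it is part of the equation. -/
def SchwingerDyson [DecidableEq ι] (ψ : Dual ℂ (FreeAlgebra ℂ (ι ⊕ M))) : Prop :=
  ∀ g, ∀ b ∈ coefficientAlgebra ι M, ∀ f,
    ψ (b * (FreeAlgebra.ι ℂ (Sum.inl g) * f)) =
      contraction (letterDirection g) ψ (ψ ∘ₗ LinearMap.mulLeft ℂ b) f

variable [DecidableEq ι] {ψ : Dual ℂ (FreeAlgebra ℂ (ι ⊕ M))}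

lemma contraction_labelledProd_eq_zero {col : ι → κ} {g : ι}
    {α β : Dual ℂ (FreeAlgebra ℂ (ι ⊕ M))} {L : List ((κ ⊕ Unit) × FreeAlgebra ℂ (ι ⊕ M))}
    (hL : ∀ a ∈ L, a.2 ∈ Algebra.adjoin ℂ (colorClass col (FreeAlgebra.ι ℂ) a.1))
    (hα : ∀ L₁ a L₂, L = L₁ ++ a :: L₂ → a.1 = Sum.inl (col g) →
      ∀ u ∈ Algebra.adjoin ℂ (colorClass col (FreeAlgebra.ι ℂ) a.1), α (labelledProd L₁ * u) = 0) :
    contraction (letterDirection g) α β (labelledProd L) = 0 := by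
  induction L generalizing α β with
  | nil => exact contraction_one _ _ _
  | cons a L ih =>
    rw [List.forall_mem_cons] at hL
    have htail : contraction (letterDirection g) (α ∘ₗ LinearMap.mulLeft ℂ a.2) β
        (labelledProd L) = 0 := by
      refine ih hL.2 fun L₁ a' L₂ hsplit ha' u hu => ?_
      simpa [mul_assoc] using hα (a :: L₁) a' L₂ (by rw [hsplit, List.cons_append]) ha' u hu
    rw [labelledProd_cons, contraction_mul, htail, zero_add]
    by_cases ha : a.1 = Sum.inl (col g)
    · refine contraction_eq_zero_of_map_eq_zero (colorClass_subset_range col _ _)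
        (fun u hu => ?_) hL.1
      simpa using hα [] a L rfl ha u hu
    · refine contraction_eq_zero_of_direction_eq_zero (fun l hl => ?_) hL.1
      rcases l with i | m
      · refine Pi.single_eq_of_ne ?_ 1
        rintro rfl
        exact ha hl.symm
      · rfl

section OfFree

lemma map_ι_mul_eq_contraction {Λ : Type*} {ψ : Dual ℂ (FreeAlgebra ℂ Λ)} {c : Λ → ℂ} {l : Λ}
    (hl : c l = 1) (hψ : ψ 1 = 1) (hsc : SemicircMoments ψ (FreeAlgebra.ι ℂ l))
    {z : FreeAlgebra ℂ Λ} (hz : z ∈ Algebra.adjoin ℂ {FreeAlgebra.ι ℂ l}) :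
    ψ (FreeAlgebra.ι ℂ l * z) = contraction c ψ ψ z := by
  obtain ⟨hmean, hrec⟩ := (semicircMoments_iff_recursion hψ).1 hsc
  rw [Algebra.adjoin_singleton_eq_range_aeval] at hz
  obtain ⟨p, rfl⟩ := hz
  induction p using Polynomial.induction_on' with
  | add p q hp hq => simpa only [map_add, mul_add] using congrArg₂ (· + ·) hp hq
  | monomial n r =>
    have hpow : ψ (FreeAlgebra.ι ℂ l ^ (n + 1)) = contraction c ψ ψ (FreeAlgebra.ι ℂ l ^ n) := by
      cases n with
      | zero => simp [hmean, contraction_one]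
      | succ n => rw [hrec, contraction_ι_pow_succ hl]
    simpa [Polynomial.aeval_monomial, ← Algebra.smul_def, ← pow_succ'] using
      congrArg (r * ·) hpow

variable {L₀ L : List ((ι ⊕ Unit) × FreeAlgebra ℂ (ι ⊕ M))} {g : ι}
  {β : Dual ℂ (FreeAlgebra ℂ (ι ⊕ M))}

lemma AreFree.contraction_labelledProd_eq_zero
    (hfree : AreFree ψ (colorClass id (FreeAlgebra.ι ℂ))) (hψ : ψ 1 = 1)
    (hL : IsAlternatingCentered ψ (colorClass id (FreeAlgebra.ι ℂ)) (L₀ ++ L))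
    (hL₀ : ∀ a ∈ L.head?, a.1 = Sum.inl g → L₀ ≠ []) :
    contraction (letterDirection g) (ψ ∘ₗ LinearMap.mulLeft ℂ (labelledProd L₀)) β
      (labelledProd L) = 0 := by
  refine _root_.contraction_labelledProd_eq_zero
    (fun a ha => hL.mem_adjoin a (List.mem_append_right L₀ ha)) fun L₁ a L₂ hsplit ha u hu => ?_
  subst hsplit
  have hsplit : L₀ ++ (L₁ ++ a :: L₂) = (L₀ ++ L₁) ++ [a] ++ L₂ := by simp
  rw [hsplit] at hL
  have hne : L₀ ++ L₁ ≠ [] := by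
    rcases L₁ with _ | ⟨a₁, L₁⟩
    · simpa using hL₀ a (by simp) ha
    · simp
  have hzero := hfree.map_labelledProd_mul_eq_zero hψ hL.left_of_append.left_of_append hne
    (by simpa using hL.left_of_append.isChain) hu
  simpa [labelledProd_append, mul_assoc] using hzero

lemma AreFree.schwingerDyson_labelledProd_of_isChain_cons
    (hfree : AreFree ψ (colorClass id (FreeAlgebra.ι ℂ))) (hψ : ψ 1 = 1)
    (hmean : ψ (FreeAlgebra.ι ℂ (Sum.inl g)) = 0)
    (hL : IsAlternatingCentered ψ (colorClass id (FreeAlgebra.ι ℂ)) L)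
    (hchain : (Sum.inl g :: L.map Prod.fst).IsChain (· ≠ ·))
    {b : FreeAlgebra ℂ (ι ⊕ M)} (hb : b ∈ coefficientAlgebra ι M) :
    ψ (b * (FreeAlgebra.ι ℂ (Sum.inl g) * labelledProd L)) =
      contraction (letterDirection g) ψ (ψ ∘ₗ LinearMap.mulLeft ℂ b) (labelledProd L) := by
  rw [coefficientAlgebra, ← colorClass_inr id] at hb
  have hzero := hfree.contraction_labelledProd_eq_zero (L₀ := []) (L := L) (g := g)
    (β := ψ ∘ₗ LinearMap.mulLeft ℂ b) hψ hL fun a ha hag =>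
      absurd hag.symm ((List.isChain_cons.1 hchain).1 a.1 (by simp_all))
  rw [hfree.map_mul_mul_labelledProd hψ hb (mem_adjoin_colorClass id _ g) Sum.inr_ne_inl hL hchain,
    hmean, zero_mul]
  simpa [LinearMap.mulLeft_one] using hzero.symm

lemma AreFree.schwingerDyson_labelledProd_cons
    (hfree : AreFree ψ (colorClass id (FreeAlgebra.ι ℂ))) (hψ : ψ 1 = 1)
    (hsc : SemicircMoments ψ (FreeAlgebra.ι ℂ (Sum.inl g))) {z : FreeAlgebra ℂ (ι ⊕ M)}
    (hL : IsAlternatingCentered ψ (colorClass id (FreeAlgebra.ι ℂ)) ((Sum.inl g, z) :: L))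
    {b : FreeAlgebra ℂ (ι ⊕ M)} (hb : b ∈ coefficientAlgebra ι M) :
    ψ (b * (FreeAlgebra.ι ℂ (Sum.inl g) * (z * labelledProd L))) =
      contraction (letterDirection g) ψ (ψ ∘ₗ LinearMap.mulLeft ℂ b) (z * labelledProd L) := by
  rw [coefficientAlgebra, ← colorClass_inr id] at hb
  have hz := hL.mem_adjoin _ List.mem_cons_self
  have hz' : z ∈ Algebra.adjoin ℂ {FreeAlgebra.ι ℂ (Sum.inl g)} := by
    rwa [colorClass_id_inl] at hz
  have hfactor {u : FreeAlgebra ℂ (ι ⊕ M)}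
      (hu : u ∈ Algebra.adjoin ℂ (colorClass id (FreeAlgebra.ι ℂ) (Sum.inl g))) :
      ψ (b * (u * labelledProd L)) = ψ u * ψ (b * labelledProd L) :=
    hfree.map_mul_mul_labelledProd hψ hb hu Sum.inr_ne_inl hL.tail hL.isChain
  have htail : contraction (letterDirection g) (ψ ∘ₗ LinearMap.mulLeft ℂ z)
      (ψ ∘ₗ LinearMap.mulLeft ℂ b) (labelledProd L) = 0 := by
    simpa using hfree.contraction_labelledProd_eq_zero (L₀ := [(Sum.inl g, z)]) (L := L) hψ hL
      (by simp)
  have hhead : contraction (letterDirection g) ψ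
      ((ψ ∘ₗ LinearMap.mulLeft ℂ b) ∘ₗ LinearMap.mulRight ℂ (labelledProd L)) z =
      contraction (letterDirection g) ψ (ψ (b * labelledProd L) • ψ) z :=
    contraction_congr (colorClass_subset_range id _ _)
      (fun u _ v hv => by simp [hfactor hv, mul_comm]) hz
  rw [contraction_mul, htail, hhead, zero_add, ← mul_assoc (FreeAlgebra.ι ℂ _),
    hfactor (mul_mem (mem_adjoin_colorClass id _ g) hz),
    map_ι_mul_eq_contraction (c := letterDirection g) (by simp) hψ hsc hz', map_smul,
    LinearMap.smul_apply, smul_eq_mul, mul_comm]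

theorem AreFree.schwingerDyson (hfree : AreFree ψ (colorClass id (FreeAlgebra.ι ℂ)))
    (hψ : ψ 1 = 1) (hsc : ∀ g, SemicircMoments ψ (FreeAlgebra.ι ℂ (Sum.inl g))) :
    SchwingerDyson ψ := by
  intro g b hb f
  have hspan := span_labelledProd_isAlternatingCentered (S := colorClass id (FreeAlgebra.ι ℂ)) hψ
    (by rw [iUnion_colorClass, FreeAlgebra.adjoin_range_ι])
  have hf : f ∈ Submodule.span ℂ _ := hspan ▸ Submodule.mem_top
  induction hf using Submodule.span_induction with
  | mem f hf =>
    obtain ⟨L, hL, rfl⟩ := hf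
    rcases hL.exists_eq_cons_or_isChain_cons (Sum.inl g) with ⟨z, L, rfl⟩ | hchain
    · rw [labelledProd_cons]
      exact hfree.schwingerDyson_labelledProd_cons hψ (hsc g) hL hb
    · exact hfree.schwingerDyson_labelledProd_of_isChain_cons hψ
        ((semicircMoments_iff_recursion hψ).1 (hsc g)).1 hL hchain hb
  | zero => simp
  | add p q _ _ hp hq => simp only [mul_add, map_add, hp, hq]
  | smul r p _ hp => simp only [mul_smul_comm, map_smul, hp]

end OfFree

section ToFree

/-- Freeness, tested only on alternating centred products of at most `n` factors. -/
def AreFreeUpTo {T : Type*} [Ring T] [Algebra ℂ T] (ψ : T → ℂ) (S : κ → Set T) (n : ℕ) : Prop :=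
  ∀ L, IsAlternatingCentered ψ S L → L ≠ [] → L.length ≤ n → ψ (labelledProd L) = 0

lemma SchwingerDyson.map_ι_mul (hSD : SchwingerDyson ψ) (g : ι) (f : FreeAlgebra ℂ (ι ⊕ M)) :
    ψ (FreeAlgebra.ι ℂ (Sum.inl g) * f) = contraction (letterDirection g) ψ ψ f := by
  simpa [LinearMap.mulLeft_one] using hSD g 1 (one_mem _) f

/-- Freeness of `u` from what stands to its right, in the two forms that support each other in an
induction on `u`: for the values of `ψ` and for its contractions. Only right factors of length at
most `n` are tested. -/
def FactorsUpTo (ψ : Dual ℂ (FreeAlgebra ℂ (ι ⊕ M))) (col : ι → κ) (k : κ) (n : ℕ)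
    (u : FreeAlgebra ℂ (ι ⊕ M)) : Prop :=
  ∀ b ∈ coefficientAlgebra ι M, ∀ L, IsAlternatingCentered ψ (colorClass col (FreeAlgebra.ι ℂ)) L →
    (Sum.inl k :: L.map Prod.fst).IsChain (· ≠ ·) → L.length ≤ n →
    ψ (b * (u * labelledProd L)) = ψ u * ψ (b * labelledProd L) ∧
    ∀ g α, contraction (letterDirection g) α
        ((ψ ∘ₗ LinearMap.mulLeft ℂ b) ∘ₗ LinearMap.mulRight ℂ (labelledProd L)) u =
      ψ (b * labelledProd L) * contraction (letterDirection g) α ψ u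

variable {col : ι → κ} {k : κ} {n : ℕ} {u : FreeAlgebra ℂ (ι ⊕ M)}
  {L : List ((κ ⊕ Unit) × FreeAlgebra ℂ (ι ⊕ M))}

lemma FactorsUpTo.map_mul_labelledProd (hu : FactorsUpTo ψ col k n u)
    (hL : IsAlternatingCentered ψ (colorClass col (FreeAlgebra.ι ℂ)) L)
    (hchain : (Sum.inl k :: L.map Prod.fst).IsChain (· ≠ ·)) (hn : L.length ≤ n) :
    ψ (u * labelledProd L) = ψ u * ψ (labelledProd L) := by
  simpa using (hu 1 (one_mem _) L hL hchain hn).1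

lemma FactorsUpTo.map_mul_labelledProd_eq_zero (hu : FactorsUpTo ψ col k n u)
    (hfree : AreFreeUpTo ψ (colorClass col (FreeAlgebra.ι ℂ)) n)
    (hL : IsAlternatingCentered ψ (colorClass col (FreeAlgebra.ι ℂ)) L)
    (hchain : (Sum.inl k :: L.map Prod.fst).IsChain (· ≠ ·)) (hne : L ≠ []) (hn : L.length ≤ n) :
    ψ (u * labelledProd L) = 0 := by
  rw [hu.map_mul_labelledProd hL hchain hn, hfree L hL hne hn, mul_zero]

lemma FactorsUpTo.contraction_mulLeft_eq_zero (hu : FactorsUpTo ψ col k n u) (hψ : ψ 1 = 1)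
    (hfree : AreFreeUpTo ψ (colorClass col (FreeAlgebra.ι ℂ)) n)
    (hL : IsAlternatingCentered ψ (colorClass col (FreeAlgebra.ι ℂ)) L)
    (hchain : (Sum.inl k :: L.map Prod.fst).IsChain (· ≠ ·)) (hn : L.length ≤ n)
    {g : ι} (hg : col g = k) (β : Dual ℂ (FreeAlgebra ℂ (ι ⊕ M))) :
    contraction (letterDirection g) (ψ ∘ₗ LinearMap.mulLeft ℂ u) β (labelledProd L) = 0 := by
  refine contraction_labelledProd_eq_zero hL.mem_adjoin fun L₁ a L₂ hsplit ha y hy => ?_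
  subst hsplit hg
  have hL₁ : IsAlternatingCentered ψ (colorClass col (FreeAlgebra.ι ℂ)) L₁ := hL.left_of_append
  have hchain₁ : (L₁.map Prod.fst ++ [a.1]).IsChain (· ≠ ·) :=
    hL.isChain.prefix ⟨L₂.map Prod.fst, by simp⟩
  have hne : L₁ ≠ [] := by
    rintro rfl
    exact (List.isChain_cons_cons.1 hchain).1 ha.symm
  have hL₁y := hL₁.concat hchain₁ (centering_mem hy) (map_centering hψ y)
  have hzero := hu.map_mul_labelledProd_eq_zero hfree hL₁
    (hchain.prefix ⟨a.1 :: L₂.map Prod.fst, by simp⟩) hne (by grind)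
  have hzero_y := hu.map_mul_labelledProd_eq_zero hfree hL₁y
    (hchain.prefix ⟨L₂.map Prod.fst, by simp⟩) (by simp) (by grind)
  rw [LinearMap.comp_apply, LinearMap.mulLeft_apply, ← mul_centering_eq (ψ := ψ) _ y, mul_add,
    map_add, mul_smul_comm, map_smul, hzero, smul_zero, add_zero,
    ← labelledProd_concat L₁ (a.1, _), hzero_y]

lemma FactorsUpTo.ι_mul (hu : FactorsUpTo ψ col k n u) (hSD : SchwingerDyson ψ) (hψ : ψ 1 = 1)
    (hfree : AreFreeUpTo ψ (colorClass col (FreeAlgebra.ι ℂ)) n) {g : ι} (hg : col g = k) :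
    FactorsUpTo ψ col k n (FreeAlgebra.ι ℂ (Sum.inl g) * u) := by
  intro b hb L hL hchain hn
  obtain ⟨hmap, hcontraction⟩ := hu b hb L hL hchain hn
  constructor
  · rw [mul_assoc, hSD g b hb, contraction_mul,
      hu.contraction_mulLeft_eq_zero hψ hfree hL hchain hn hg, zero_add, hcontraction,
      hSD.map_ι_mul, mul_comm]
  · intro h α
    rw [contraction_mul, hcontraction, contraction_mul, contraction_ι, contraction_ι]
    simp only [LinearMap.comp_apply, LinearMap.mulRight_apply, LinearMap.mulLeft_apply,
      one_mul, hmap]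
    ring

lemma SchwingerDyson.factorsUpTo (hSD : SchwingerDyson ψ) (hψ : ψ 1 = 1)
    (hfree : AreFreeUpTo ψ (colorClass col (FreeAlgebra.ι ℂ)) n)
    (hu : u ∈ Algebra.adjoin ℂ (colorClass col (FreeAlgebra.ι ℂ) (Sum.inl k))) :
    FactorsUpTo ψ col k n u := by
  refine adjoin_induction_left ?_ (fun u v hu hv b hb L hL hchain hn => ?_)
    (fun r u hu b hb L hL hchain hn => ?_) (fun x hx u _ hu => ?_) hu
  · intro b _ L _ _ _
    simp [hψ, contraction_one]
  · obtain ⟨hu₁, hu₂⟩ := hu b hb L hL hchain hn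
    obtain ⟨hv₁, hv₂⟩ := hv b hb L hL hchain hn
    refine ⟨?_, fun g α => ?_⟩
    · simp only [add_mul, mul_add, map_add, hu₁, hv₁]
    · simp only [map_add, hu₂, hv₂, mul_add]
  · obtain ⟨hu₁, hu₂⟩ := hu b hb L hL hchain hn
    refine ⟨?_, fun g α => ?_⟩
    · simp only [smul_mul_assoc, mul_smul_comm, map_smul, hu₁]
    · simp only [map_smul, hu₂, mul_smul_comm]
  · obtain ⟨l, hl, rfl⟩ := hx
    rcases l with g | m
    · exact hu.ι_mul hSD hψ hfree (Sum.inl_injective hl)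
    · exact absurd hl Sum.inr_ne_inl

theorem SchwingerDyson.areFree (hSD : SchwingerDyson ψ) (hψ : ψ 1 = 1) (col : ι → κ) :
    AreFree ψ (colorClass col (FreeAlgebra.ι ℂ)) := by
  suffices hfree : ∀ n, AreFreeUpTo ψ (colorClass col (FreeAlgebra.ι ℂ)) n from
    areFree_of_map_labelledProd_eq_zero fun L hL hne => hfree _ L hL hne le_rfl
  intro n
  induction n with
  | zero => exact fun L _ hne hn => absurd (List.length_eq_zero_iff.1 (Nat.le_zero.1 hn)) hne
  | succ n ih =>
    rintro (_ | ⟨⟨k | _, z⟩, L⟩) hL hne hn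
    · exact absurd rfl hne
    · have hz := hSD.factorsUpTo hψ ih (hL.mem_adjoin (Sum.inl k, z) List.mem_cons_self)
      rw [labelledProd_cons, hz.map_mul_labelledProd hL.tail hL.isChain (Nat.le_of_succ_le_succ hn),
        hL.map_eq_zero (Sum.inl k, z) List.mem_cons_self, zero_mul]
    · have hz := hL.mem_adjoin (Sum.inr (), z) List.mem_cons_self
      rcases L with _ | ⟨⟨k | _, u⟩, L⟩
      · simpa using hL.map_eq_zero (Sum.inr (), z) List.mem_cons_self
      · have hu := hSD.factorsUpTo hψ ih (hL.tail.mem_adjoin (Sum.inl k, u) List.mem_cons_self)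
        rw [colorClass_inr] at hz
        rw [labelledProd_cons, labelledProd_cons, (hu z hz L hL.tail.tail hL.tail.isChain
          (by grind)).1, hL.tail.map_eq_zero (Sum.inl k, u) List.mem_cons_self, zero_mul]
      · exact absurd rfl (List.isChain_cons_cons.1 hL.isChain).1

theorem SchwingerDyson.semicircMoments (hSD : SchwingerDyson ψ) (hψ : ψ 1 = 1) (g : ι) :
    SemicircMoments ψ (FreeAlgebra.ι ℂ (Sum.inl g)) := by
  refine (semicircMoments_iff_recursion hψ).2 ⟨?_, fun n => ?_⟩
  · simpa [contraction_one] using hSD.map_ι_mul g 1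
  · rw [pow_succ', hSD.map_ι_mul, contraction_ι_pow_succ (by simp)]

end ToFree

end SchwingerDyson

section LetterMatrix

open Module (Dual)

variable {n ι K M T : Type*} [Fintype n] [Fintype K] [Ring T] [Algebra ℂ T]

/-- The normalized trace `tr ⊗ φ` on the `n × n` matrices over `T`. -/
def normalizedTrace (n : Type*) [Fintype n] (φ : T →ₗ[ℂ] ℂ) : Matrix n n T →ₗ[ℂ] ℂ :=
  (Fintype.card n : ℂ)⁻¹ • (φ ∘ₗ Matrix.traceLinearMap n ℂ T)

lemma normalizedTrace_one [Nonempty n] [DecidableEq n] {φ : T →ₗ[ℂ] ℂ} (hφ : φ 1 = 1) :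
    normalizedTrace n φ 1 = 1 := by
  have hcard : φ (Fintype.card n : T) = Fintype.card n := by
    rw [← nsmul_one, map_nsmul, hφ, nsmul_one]
  simp [normalizedTrace, hcard]

/-- Matrices assembled from the letters `v`: the matrix letter `Sum.inl a` has as its entries
linear combinations of the scalar letters `Sum.inl q`, with coefficients `coef a i j q`, while a
coefficient letter `Sum.inr m` is a matrix of scalar coefficient letters. -/
def letterMatrix (coef : ι → Matrix n n (K → ℂ)) (v : K ⊕ M → T) :
    ι ⊕ Matrix n n M → Matrix n n T :=
  Sum.elim (fun a => (coef a).map (Fintype.linearCombination ℂ (v ∘ Sum.inl)))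
    fun m => m.map (v ∘ Sum.inr)

variable [DecidableEq n] (coef : ι → Matrix n n (K → ℂ)) (i j : n)

/-- The universal case of `letterMatrix`, as a homomorphism on noncommutative polynomials. -/
def letterMatrixHom :
    FreeAlgebra ℂ (ι ⊕ Matrix n n M) →ₐ[ℂ] Matrix n n (FreeAlgebra ℂ (K ⊕ M)) :=
  FreeAlgebra.lift ℂ (letterMatrix coef (FreeAlgebra.ι ℂ))

lemma mapMatrix_comp_letterMatrixHom (v : K ⊕ M → T) :
    (FreeAlgebra.lift ℂ v).mapMatrix.comp (letterMatrixHom coef) =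
      FreeAlgebra.lift ℂ (letterMatrix coef v) := by
  ext l i j
  rcases l with a | m <;> simp [letterMatrixHom, letterMatrix, Fintype.linearCombination_apply]

/-- The `(i, j)` entry of `letterMatrixHom`. -/
def letterMatrixEntry : FreeAlgebra ℂ (ι ⊕ Matrix n n M) →ₗ[ℂ] FreeAlgebra ℂ (K ⊕ M) :=
  Matrix.entryLinearMap ℂ _ i j ∘ₗ (letterMatrixHom coef).toLinearMap

lemma letterMatrixEntry_algebraMap (r : ℂ) :
    letterMatrixEntry (M := M) coef i j (algebraMap ℂ _ r) =
      algebraMap ℂ _ (if i = j then r else 0) := by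
  by_cases h : i = j <;> simp [letterMatrixEntry, Matrix.algebraMap_matrix_apply, h]

lemma letterMatrixEntry_one :
    letterMatrixEntry (M := M) coef i j 1 = if i = j then 1 else 0 := by
  simpa [apply_ite] using letterMatrixEntry_algebraMap (M := M) coef i j 1

lemma letterMatrixEntry_ι_inl (a : ι) :
    letterMatrixEntry (M := M) coef i j (FreeAlgebra.ι ℂ (Sum.inl a)) =
      ∑ q, coef a i j q • FreeAlgebra.ι ℂ (Sum.inl q) := by
  simp [letterMatrixEntry, letterMatrixHom, letterMatrix, Fintype.linearCombination_apply]

lemma letterMatrixEntry_ι_inr (m : Matrix n n M) :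
    letterMatrixEntry coef i j (FreeAlgebra.ι ℂ (Sum.inr m)) =
      FreeAlgebra.ι ℂ (Sum.inr (m i j)) := by
  simp [letterMatrixEntry, letterMatrixHom, letterMatrix]

lemma letterMatrixEntry_mul (f g : FreeAlgebra ℂ (ι ⊕ Matrix n n M)) :
    letterMatrixEntry coef i j (f * g) =
      ∑ p, letterMatrixEntry coef i p f * letterMatrixEntry coef p j g := by
  simp [letterMatrixEntry, Matrix.mul_apply]

lemma comp_letterMatrixEntry_comp_mulLeft (α : Dual ℂ (FreeAlgebra ℂ (K ⊕ M)))
    (f : FreeAlgebra ℂ (ι ⊕ Matrix n n M)) :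
    (α ∘ₗ letterMatrixEntry coef i j) ∘ₗ LinearMap.mulLeft ℂ f =
      ∑ p, (α ∘ₗ LinearMap.mulLeft ℂ (letterMatrixEntry coef i p f)) ∘ₗ
        letterMatrixEntry coef p j := by
  ext g
  simp [letterMatrixEntry_mul]

lemma comp_letterMatrixEntry_comp_mulRight (α : Dual ℂ (FreeAlgebra ℂ (K ⊕ M)))
    (g : FreeAlgebra ℂ (ι ⊕ Matrix n n M)) :
    (α ∘ₗ letterMatrixEntry coef i j) ∘ₗ LinearMap.mulRight ℂ g =
      ∑ p, (α ∘ₗ LinearMap.mulRight ℂ (letterMatrixEntry coef p j g)) ∘ₗ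
        letterMatrixEntry coef i p := by
  ext f
  simp [letterMatrixEntry_mul]

lemma letterMatrixEntry_mem_coefficientAlgebra {b : FreeAlgebra ℂ (ι ⊕ Matrix n n M)}
    (hb : b ∈ coefficientAlgebra ι (Matrix n n M)) :
    letterMatrixEntry coef i j b ∈ coefficientAlgebra K M := by
  induction hb using Algebra.adjoin_induction generalizing i j with
  | mem b hb =>
    obtain ⟨m, rfl⟩ := hb
    exact letterMatrixEntry_ι_inr coef i j m ▸ Algebra.subset_adjoin ⟨m i j, rfl⟩
  | algebraMap r => exact letterMatrixEntry_algebraMap coef i j r ▸ Subalgebra.algebraMap_mem _ _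
  | add b b' _ _ hb hb' => simpa only [map_add] using add_mem (hb i j) (hb' i j)
  | mul b b' _ _ hb hb' =>
    exact letterMatrixEntry_mul coef i j b b' ▸ sum_mem fun p _ => mul_mem (hb i p) (hb' p j)

lemma normalizedTrace_comp_letterMatrixHom (ψ : Dual ℂ (FreeAlgebra ℂ (K ⊕ M))) :
    normalizedTrace n ψ ∘ₗ (letterMatrixHom coef).toLinearMap =
      (Fintype.card n : ℂ)⁻¹ • ∑ i, ψ ∘ₗ letterMatrixEntry coef i i := by
  ext f
  simp [normalizedTrace, letterMatrixEntry, Matrix.trace]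

variable [DecidableEq ι]

/-- The entries of the matrices described by `coef` have the covariances of the entries of free
standard semicircular matrices: the `(i, j)` entry of a matrix pairs with the `(j, i)` entry of
the same matrix only. The pairing is bilinear, without complex conjugation. -/
def IsSemicircularCovariance : Prop :=
  ∀ a b i j k l, coef a i j ⬝ᵥ coef b k l =
    if a = b ∧ i = l ∧ j = k then (Fintype.card n : ℂ)⁻¹ else 0

variable {coef}

-- The chain rule: by the covariance condition the derivative of the `(k, l)` entry of a matrix
-- letter vanishes unless `k = j` and `l = i`, so differentiating an entry of a product of matrices
-- cuts it into a `(k, j)` entry and an `(i, l)` entry.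
lemma IsSemicircularCovariance.contraction_letterMatrixEntry (hcov : IsSemicircularCovariance coef)
    (a : ι) (i j k l : n) (α β : Dual ℂ (FreeAlgebra ℂ (K ⊕ M)))
    (f : FreeAlgebra ℂ (ι ⊕ Matrix n n M)) :
    contraction (Sum.elim (coef a i j) 0) α β (letterMatrixEntry coef k l f) =
      (Fintype.card n : ℂ)⁻¹ * contraction (letterDirection a)
        (α ∘ₗ letterMatrixEntry coef k j) (β ∘ₗ letterMatrixEntry coef i l) f := by
  induction f using FreeAlgebra.induction generalizing k l α β with
  | grade0 r => simp only [letterMatrixEntry_algebraMap, contraction_algebraMap, mul_zero]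
  | grade1 x =>
    rcases x with b | m
    · have hentry : contraction (Sum.elim (coef a i j) 0) α β
          (letterMatrixEntry coef k l (FreeAlgebra.ι ℂ (Sum.inl b))) =
            (coef a i j ⬝ᵥ coef b k l) * (α 1 * β 1) := by
        simp only [letterMatrixEntry_ι_inl, map_sum, map_smul, contraction_ι, Sum.elim_inl,
          smul_eq_mul, dotProduct, Finset.sum_mul]
        exact Finset.sum_congr rfl fun q _ => by ring
      rw [hentry, hcov, contraction_ι]
      by_cases hab : a = b <;> by_cases hil : i = l <;> by_cases hjk : k = j <;>
        simp [letterMatrixEntry_one, hab, hil, hjk, Ne.symm]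
    · simp [letterMatrixEntry_ι_inr, contraction_ι]
  | mul f g hf hg =>
    simp only [letterMatrixEntry_mul, map_sum, contraction_mul, hf, hg,
      comp_letterMatrixEntry_comp_mulLeft, comp_letterMatrixEntry_comp_mulRight,
      Finset.sum_add_distrib, LinearMap.sum_apply, mul_add, Finset.mul_sum]
  | add f g hf hg => simp only [map_add, hf, hg, mul_add]

lemma SchwingerDyson.map_mul_sum_smul_mul [DecidableEq K] {ψ : Dual ℂ (FreeAlgebra ℂ (K ⊕ M))}
    (hSD : SchwingerDyson ψ) (c : K → ℂ) {b : FreeAlgebra ℂ (K ⊕ M)}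
    (hb : b ∈ coefficientAlgebra K M) (f : FreeAlgebra ℂ (K ⊕ M)) :
    ψ (b * ((∑ q, c q • FreeAlgebra.ι ℂ (Sum.inl q)) * f)) =
      contraction (Sum.elim c 0) ψ (ψ ∘ₗ LinearMap.mulLeft ℂ b) f := by
  have hc : (Sum.elim c 0 : K ⊕ M → ℂ) = ∑ q, c q • letterDirection q := by
    ext (q | m) <;> simp [Finset.sum_apply, Pi.single_apply]
  simp only [hc, contraction_sum_smul, ← hSD _ b hb f, Finset.sum_mul, Finset.mul_sum, map_sum,
    smul_mul_assoc, mul_smul_comm, map_smul, smul_eq_mul]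

theorem SchwingerDyson.normalizedTrace_comp_letterMatrixHom [DecidableEq K]
    {ψ : Dual ℂ (FreeAlgebra ℂ (K ⊕ M))} (hSD : SchwingerDyson ψ)
    (hcov : IsSemicircularCovariance coef) :
    SchwingerDyson (normalizedTrace n ψ ∘ₗ (letterMatrixHom coef).toLinearMap) := by
  intro a b hb f
  have hentry (i j k : n) : ψ (letterMatrixEntry coef i j b *
      (letterMatrixEntry coef j k (FreeAlgebra.ι ℂ (Sum.inl a)) * letterMatrixEntry coef k i f)) =
      (Fintype.card n : ℂ)⁻¹ * contraction (letterDirection a) (ψ ∘ₗ letterMatrixEntry coef k k)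
        ((ψ ∘ₗ LinearMap.mulLeft ℂ (letterMatrixEntry coef i j b)) ∘ₗ letterMatrixEntry coef j i)
        f := by
    rw [letterMatrixEntry_ι_inl, hSD.map_mul_sum_smul_mul _
      (letterMatrixEntry_mem_coefficientAlgebra coef i j hb), hcov.contraction_letterMatrixEntry]
  have hleft : (∑ i, ψ ∘ₗ letterMatrixEntry coef i i) ∘ₗ LinearMap.mulLeft ℂ b =
      ∑ i, ∑ j, (ψ ∘ₗ LinearMap.mulLeft ℂ (letterMatrixEntry coef i j b)) ∘ₗ
        letterMatrixEntry coef j i := by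
    simp only [← comp_letterMatrixEntry_comp_mulLeft]
    ext g
    simp
  rw [_root_.normalizedTrace_comp_letterMatrixHom, LinearMap.smul_comp, hleft]
  simp only [map_smul, map_sum, LinearMap.smul_apply, LinearMap.sum_apply, LinearMap.comp_apply,
    letterMatrixEntry_mul, Finset.mul_sum, Finset.smul_sum, hentry, smul_eq_mul]

end LetterMatrix

section SemicircularMatrices

variable {n ι κ K M T : Type*} [Fintype K] [Ring T] [Algebra ℂ T]
  {φ : T →ₗ[ℂ] ℂ} {v : K ⊕ M → T} {coef : ι → Matrix n n (K → ℂ)}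

lemma areFree_colorClass_iff {Λ N : Type*} (col : Λ → κ) (v : Λ ⊕ N → T) :
    AreFree φ (colorClass col v) ↔
      AreFree (φ ∘ₗ (FreeAlgebra.lift ℂ v).toLinearMap) (colorClass col (FreeAlgebra.ι ℂ)) := by
  have himage : colorClass col v =
      fun j => FreeAlgebra.lift ℂ v '' colorClass col (FreeAlgebra.ι ℂ) j := by
    funext j
    simp only [colorClass, Set.image_image, FreeAlgebra.lift_ι_apply]
  rw [himage]
  exact areFree_image_iff _ _ _

lemma semicircMoments_lift_ι_iff {Λ : Type*} (v : Λ → T) (l : Λ) :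
    SemicircMoments (φ ∘ₗ (FreeAlgebra.lift ℂ v).toLinearMap) (FreeAlgebra.ι ℂ l) ↔
      SemicircMoments φ (v l) := by
  simp [SemicircMoments]

lemma range_letterMatrix_inr (coef : ι → Matrix n n (K → ℂ)) (v : K ⊕ M → T) :
    (Set.range fun m => letterMatrix coef v (Sum.inr m)) =
      {X | ∀ i j, X i j ∈ Set.range fun m => v (Sum.inr m)} := by
  ext X
  constructor
  · rintro ⟨m, rfl⟩ i j
    exact ⟨m i j, rfl⟩
  · intro hX
    choose m hm using hX
    exact ⟨m, Matrix.ext hm⟩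

variable [Fintype n] [DecidableEq n] [DecidableEq ι]

lemma IsSemicircularCovariance.schwingerDyson_letterMatrix
    (hcov : IsSemicircularCovariance coef) (hφ : φ 1 = 1)
    (hsc : ∀ q, SemicircMoments φ (v (Sum.inl q))) (hfree : AreFree φ (colorClass id v)) :
    SchwingerDyson (normalizedTrace n φ ∘ₗ
      (FreeAlgebra.lift ℂ (letterMatrix coef v)).toLinearMap) := by
  classical
  have hSD : SchwingerDyson (φ ∘ₗ (FreeAlgebra.lift ℂ v).toLinearMap) :=
    ((areFree_colorClass_iff id v).1 hfree).schwingerDyson (by simpa)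
      fun q => (semicircMoments_lift_ι_iff v _).2 (hsc q)
  convert hSD.normalizedTrace_comp_letterMatrixHom hcov using 1
  rw [← mapMatrix_comp_letterMatrixHom]
  ext f
  simp [normalizedTrace, Matrix.trace]

theorem IsSemicircularCovariance.semicircMoments_letterMatrix [Nonempty n]
    (hcov : IsSemicircularCovariance coef) (hφ : φ 1 = 1)
    (hsc : ∀ q, SemicircMoments φ (v (Sum.inl q))) (hfree : AreFree φ (colorClass id v)) (a : ι) :
    SemicircMoments (normalizedTrace n φ) (letterMatrix coef v (Sum.inl a)) :=
  (semicircMoments_lift_ι_iff _ _).1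
    ((hcov.schwingerDyson_letterMatrix hφ hsc hfree).semicircMoments
      (by simpa using normalizedTrace_one hφ) a)

theorem IsSemicircularCovariance.areFree_letterMatrix [Nonempty n]
    (hcov : IsSemicircularCovariance coef) (hφ : φ 1 = 1)
    (hsc : ∀ q, SemicircMoments φ (v (Sum.inl q))) (hfree : AreFree φ (colorClass id v))
    (col : ι → κ) : AreFree (normalizedTrace n φ) (colorClass col (letterMatrix coef v)) :=
  (areFree_colorClass_iff _ _).2
    ((hcov.schwingerDyson_letterMatrix hφ hsc hfree).areFree
      (by simpa using normalizedTrace_one hφ) col)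

end SemicircularMatrices

section CircularMatrix

open Complex (I)

section Star

variable {E : Type*} [AddCommGroup E] [StarAddMonoid E] [Module ℂ E] [StarModule ℂ E]

lemma star_ofReal_inv_smul_add_star (r : ℝ) (c : E) :
    star ((r : ℂ)⁻¹ • (c + star c)) = (r : ℂ)⁻¹ • (c + star c) := by
  simp [star_smul, add_comm]

lemma star_I_mul_ofReal_inv_smul_sub_star (r : ℝ) (c : E) :
    star ((I * (r : ℂ))⁻¹ • (c - star c)) = (I * (r : ℂ))⁻¹ • (c - star c) := by
  rw [star_smul, star_sub, star_star, ← neg_sub, smul_neg, ← neg_smul]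
  simp

lemma pair_star_subset_adjoin {T : Type*} [Ring T] [Algebra ℂ T] [Star T] {r s : ℂ} (hr : r ≠ 0)
    (hs : s ≠ 0) (c : T) :
    {c, star c} ⊆ (Algebra.adjoin ℂ {r • (c + star c), s • (c - star c)} : Set T) := by
  set R := Subalgebra.toSubmodule (Algebra.adjoin ℂ {r • (c + star c), s • (c - star c)})
  have hadd : c + star c ∈ R :=
    (R.smul_mem_iff hr).1 (Algebra.subset_adjoin (Set.mem_insert _ _))
  have hsub : c - star c ∈ R :=
    (R.smul_mem_iff hs).1 (Algebra.subset_adjoin (Set.mem_insert_of_mem _ rfl))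
  suffices hmem : c ∈ R ∧ star c ∈ R from Set.pair_subset hmem.1 hmem.2
  constructor
  · convert R.smul_mem (2⁻¹ : ℂ) (add_mem hadd hsub) using 1
    module
  · convert R.smul_mem (2⁻¹ : ℂ) (sub_mem hadd hsub) using 1
    module

lemma star_circ {x y : A} (hx : star x = x) (hy : star y = y) :
    star (circ x y) = (Real.sqrt 2 : ℂ)⁻¹ • (x + (-I) • y) := by
  simp [circ, star_smul, hx, hy]

end Star

lemma ofReal_sqrt_inv_mul_self {r : ℝ} (hr : 0 ≤ r) :
    ((Real.sqrt r : ℂ))⁻¹ * (Real.sqrt r : ℂ)⁻¹ = (r : ℂ)⁻¹ := by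
  rw [← mul_inv, ← Complex.ofReal_mul, Real.mul_self_sqrt hr]

variable {Q n T : Type*} [Ring T] [Algebra ℂ T]

lemma phid_eq_normalizedTrace {d : ℕ} (φ : T →ₗ[ℂ] ℂ) :
    (fun X => phid φ X) = normalizedTrace (Fin d) φ := by
  ext X
  simp [phid, normalizedTrace, Matrix.trace, div_eq_inv_mul]

/-- The coefficients of `(x p + ε y p) / √2` in the letters `x`, `y`: the circular element with
index `p` for `ε = I` and its adjoint for `ε = -I`. -/
def circularCoef [DecidableEq Q] (ε : ℂ) (p : Q) : Q ⊕ Q → ℂ :=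
  (Real.sqrt 2 : ℂ)⁻¹ • Sum.elim (Pi.single p 1) (Pi.single p ε)

lemma circularCoef_dotProduct [DecidableEq Q] [Fintype Q] (ε ε' : ℂ) (p q : Q) :
    circularCoef ε p ⬝ᵥ circularCoef ε' q = if p = q then (1 + ε * ε') / 2 else 0 := by
  have h2 := ofReal_sqrt_inv_mul_self (zero_le_two (α := ℝ))
  simp only [circularCoef, smul_dotProduct, dotProduct_smul, sumElim_dotProduct_sumElim,
    single_dotProduct, Pi.single_apply, smul_smul, h2]
  split_ifs <;> simp [div_eq_inv_mul]

lemma linearCombination_circularCoef [DecidableEq Q] [Fintype Q] (ε : ℂ) (p : Q) (x y : Q → T) :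
    Fintype.linearCombination ℂ (Sum.elim x y) (circularCoef ε p) =
      (Real.sqrt 2 : ℂ)⁻¹ • (x p + ε • y p) := by
  simp [circularCoef, Fintype.linearCombination_apply, Pi.single_apply]

/-- The elements `x i j` and `y i j` as letters, together with the elements of `S` as coefficient
letters. -/
def circularLetters (x y : n → n → T) (S : Set T) : ((n × n) ⊕ (n × n)) ⊕ S → T :=
  Sum.elim (Sum.elim (fun q => x q.1 q.2) fun q => y q.1 q.2) (↑)

lemma AreFree.colorClass_circularLetters {φ : T → ℂ} {x y : n → n → T} {S : Set T}
    (hfree : AreFree φ (Sum.elim (fun q : n × n => {x q.1 q.2})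
      (Sum.elim (fun q : n × n => {y q.1 q.2}) fun _ : Unit => S))) :
    AreFree φ (colorClass id (circularLetters x y S)) := by
  refine hfree.of_subset_adjoin (Equiv.sumAssoc _ _ _).injective ?_
  rintro ((q | q) | ⟨⟩)
  · simp [colorClass_id_inl, circularLetters]
  · simp [colorClass_id_inl, circularLetters]
  · rw [colorClass_inr]
    simp [circularLetters, Algebra.subset_adjoin]

lemma AreFree.vecCons_of_colorClass_id {N : Type*} {ψ : T → ℂ} {w : Fin 2 ⊕ N → T}
    (hfree : AreFree ψ (colorClass id w)) :
    AreFree ψ ![{w (Sum.inl 0)}, {w (Sum.inl 1)}, Set.range fun m => w (Sum.inr m)] := by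
  refine hfree.of_subset_adjoin (e := ![Sum.inl 0, Sum.inl 1, Sum.inr ()]) (by decide) fun k => ?_
  fin_cases k <;> simp [colorClass_id_inl, colorClass_inr, Algebra.subset_adjoin]

lemma AreFree.vecCons_of_colorClass_const {N : Type*} {ψ : T → ℂ} {w : Fin 2 ⊕ N → T}
    (hfree : AreFree ψ (colorClass (fun _ => ()) w)) {P : Set T}
    (hP : P ⊆ Algebra.adjoin ℂ {w (Sum.inl 0), w (Sum.inl 1)}) :
    AreFree ψ ![P, Set.range fun m => w (Sum.inr m)] := by
  refine hfree.of_subset_adjoin (e := ![Sum.inl (), Sum.inr ()]) (by decide) fun k => ?_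
  fin_cases k
  · refine hP.trans (Algebra.adjoin_mono ?_)
    simp [colorClass, Set.insert_subset_iff]
  · simp [colorClass_inr, Algebra.subset_adjoin]

variable [Fintype n] [DecidableEq n]

/-- The coefficients of the entries of `(C + C*) / √(2d)` and `(C - C*) / (i √(2d))` in the
letters `x i j`, `y i j`, where `C` is the `d × d` matrix of the circular elements. -/
def circularMatrixPartCoef : Fin 2 → Matrix n n ((n × n) ⊕ (n × n) → ℂ) :=
  ![.of fun i j => (Real.sqrt (2 * Fintype.card n) : ℂ)⁻¹ •
      (circularCoef I (i, j) + circularCoef (-I) (j, i)),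
    .of fun i j => (I * (Real.sqrt (2 * Fintype.card n) : ℂ))⁻¹ •
      (circularCoef I (i, j) - circularCoef (-I) (j, i))]

lemma isSemicircularCovariance_circularMatrixPartCoef :
    IsSemicircularCovariance (circularMatrixPartCoef (n := n)) := by
  intro a b i j k l
  have hil : (i, j) = (l, k) ↔ i = l ∧ j = k := Prod.ext_iff
  have hjk : (j, i) = (k, l) ↔ i = l ∧ j = k := Prod.ext_iff.trans and_comm
  have hnorm := ofReal_sqrt_inv_mul_self (r := 2 * Fintype.card n) (by positivity)
  push_cast [mul_inv] at hnorm
  fin_cases a <;> fin_cases b <;>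
    simp only [circularMatrixPartCoef, Fin.zero_eta, Fin.mk_one, Matrix.cons_val_zero,
      Matrix.cons_val_one, Matrix.of_apply, smul_dotProduct, dotProduct_smul, add_dotProduct,
      sub_dotProduct, dotProduct_add, dotProduct_sub, circularCoef_dotProduct, hil, hjk, mul_inv,
      Complex.inv_I] <;>
    generalize ((Real.sqrt (2 * Fintype.card n) : ℂ))⁻¹ = r at hnorm <;>
    by_cases hpair : i = l ∧ j = k <;> simp [hpair]
  · linear_combination 2 * hnorm
  · linear_combination 2 * hnorm - 2 * r ^ 2 * Complex.I_mul_I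

variable {x y : n → n → A}

lemma letterMatrix_circularMatrixPartCoef_zero (hx : ∀ i j, star (x i j) = x i j)
    (hy : ∀ i j, star (y i j) = y i j) (S : Set A) :
    letterMatrix circularMatrixPartCoef (circularLetters x y S) (Sum.inl 0) =
      (Real.sqrt (2 * Fintype.card n) : ℂ)⁻¹ • (Matrix.of (fun i j => circ (x i j) (y i j)) +
        star (Matrix.of fun i j => circ (x i j) (y i j))) := by
  ext i j
  simp only [letterMatrix, circularLetters, Sum.elim_inl, Sum.elim_comp_inl, Matrix.map_apply,
    circularMatrixPartCoef, Matrix.cons_val_zero, Matrix.of_apply, map_smul, map_add,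
    linearCombination_circularCoef, Matrix.smul_apply, Matrix.add_apply, Matrix.star_apply,
    star_circ (hx _ _) (hy _ _)]
  rfl

lemma letterMatrix_circularMatrixPartCoef_one (hx : ∀ i j, star (x i j) = x i j)
    (hy : ∀ i j, star (y i j) = y i j) (S : Set A) :
    letterMatrix circularMatrixPartCoef (circularLetters x y S) (Sum.inl 1) =
      (I * (Real.sqrt (2 * Fintype.card n) : ℂ))⁻¹ • (Matrix.of (fun i j => circ (x i j) (y i j)) -
        star (Matrix.of fun i j => circ (x i j) (y i j))) := by
  ext i j
  simp only [letterMatrix, circularLetters, Sum.elim_inl, Sum.elim_comp_inl, Matrix.map_apply,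
    circularMatrixPartCoef, Matrix.cons_val_one, Matrix.cons_val_zero, Matrix.of_apply, map_smul,
    map_sub, linearCombination_circularCoef, Matrix.smul_apply, Matrix.sub_apply, Matrix.star_apply,
    star_circ (hx _ _) (hy _ _)]
  rfl

end CircularMatrix

theorem matrix_of_circulars_is_circular_and_free_general
    {d : ℕ} (hd : 0 < d)
    (φ : A →ₗ[ℂ] ℂ)
    (hφ1 : φ 1 = 1)
    (B : Subalgebra ℂ A)
    (x y : Fin d → Fin d → A)
    (hx_sa : ∀ i j, star (x i j) = x i j)
    (hx_sc : ∀ i j, SemicircMoments (fun z => φ z) (x i j))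
    (hy_sa : ∀ i j, star (y i j) = y i j)
    (hy_sc : ∀ i j, SemicircMoments (fun z => φ z) (y i j))
    (hfree : AreFree (fun z => φ z)
      (Sum.elim (fun q : Fin d × Fin d => ({x q.1 q.2} : Set A))
        (Sum.elim (fun q : Fin d × Fin d => ({y q.1 q.2} : Set A))
          (fun _ : Unit => (B : Set A))))) :
    let C : Matrix (Fin d) (Fin d) A := Matrix.of fun i j => circ (x i j) (y i j)
    let S₁ : Matrix (Fin d) (Fin d) A :=
      ((Real.sqrt (2 * d) : ℂ))⁻¹ • (C + star C)
    let S₂ : Matrix (Fin d) (Fin d) A :=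
      (Complex.I * (Real.sqrt (2 * d) : ℂ))⁻¹ • (C - star C)
    star S₁ = S₁ ∧ star S₂ = S₂ ∧
    SemicircMoments (fun X => phid φ X) S₁ ∧
    SemicircMoments (fun X => phid φ X) S₂ ∧
    AreFree (fun X => phid φ X)
      (![{S₁}, {S₂}, {X : Matrix (Fin d) (Fin d) A | ∀ i j, X i j ∈ B}] :
        Fin 3 → Set (Matrix (Fin d) (Fin d) A)) ∧
    AreFree (fun X => phid φ X)
      (![{C, star C}, {X : Matrix (Fin d) (Fin d) A | ∀ i j, X i j ∈ B}] :
        Fin 2 → Set (Matrix (Fin d) (Fin d) A)) := by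
  intro C S₁ S₂
  have : Nonempty (Fin d) := Fin.pos_iff_nonempty.1 hd
  have hsqrt : (Real.sqrt (2 * d) : ℂ) ≠ 0 := by simpa using hd.ne'
  let v := circularLetters x y (B : Set A)
  have hS₁ : letterMatrix circularMatrixPartCoef v (Sum.inl 0) = S₁ := by
    simpa only [Fintype.card_fin] using letterMatrix_circularMatrixPartCoef_zero hx_sa hy_sa B
  have hS₂ : letterMatrix circularMatrixPartCoef v (Sum.inl 1) = S₂ := by
    simpa only [Fintype.card_fin] using letterMatrix_circularMatrixPartCoef_one hx_sa hy_sa B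
  have hB : (Set.range fun m => letterMatrix circularMatrixPartCoef v (Sum.inr m)) =
      {X | ∀ i j, X i j ∈ B} := by
    simp [range_letterMatrix_inr, v, circularLetters]
  have hsc : ∀ q, SemicircMoments φ (v (Sum.inl q)) :=
    Sum.rec (fun q => hx_sc q.1 q.2) fun q => hy_sc q.1 q.2
  have hcov := isSemicircularCovariance_circularMatrixPartCoef (n := Fin d)
  have hmom := hcov.semicircMoments_letterMatrix hφ1 hsc hfree.colorClass_circularLetters
  have hthree := (hcov.areFree_letterMatrix hφ1 hsc hfree.colorClass_circularLetters
    id).vecCons_of_colorClass_id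
  have htwo := (hcov.areFree_letterMatrix hφ1 hsc hfree.colorClass_circularLetters
    fun _ => ()).vecCons_of_colorClass_const (P := {C, star C})
  rw [hS₁, hS₂, hB] at hthree htwo
  rw [phid_eq_normalizedTrace]
  exact ⟨star_ofReal_inv_smul_add_star _ C, star_I_mul_ofReal_inv_smul_sub_star _ C,
    hS₁ ▸ hmom 0, hS₂ ▸ hmom 1, hthree, htwo (pair_star_subset_adjoin (inv_ne_zero hsqrt)
      (inv_ne_zero (mul_ne_zero Complex.I_ne_zero hsqrt)) C)⟩

/-- Proposition 5.3, 1°: a matrix `C` whose entries are free circular elements,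
free from `ℬ`, is circular of variance `d` in `M_d(𝒜)` — more precisely the real and
imaginary parts `S₁ = (C + C*)/√(2d)`, `S₂ = (C − C*)/(i√(2d))` are self-adjoint,
standard semicircular in moments, and `{S₁}, {S₂}, M_d(ℬ)` are free; in particular
`{C, C*}` is free from `M_d(ℬ)`. -/
theorem matrix_of_circulars_is_circular_and_free
    {d : ℕ} (hd : 0 < d)
    (φ : A →ₗ[ℂ] ℂ)
    (hφ1 : φ 1 = 1)
    (hφpos : ∀ x : A, 0 ≤ φ (star x * x))
    (hφtr : ∀ x y : A, φ (x * y) = φ (y * x))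
    (B : StarSubalgebra ℂ A)
    (x y : Fin d → Fin d → A)
    (hx_sa : ∀ i j, star (x i j) = x i j)
    (hx_sc : ∀ i j, SemicircMoments (fun z => φ z) (x i j))
    (hy_sa : ∀ i j, star (y i j) = y i j)
    (hy_sc : ∀ i j, SemicircMoments (fun z => φ z) (y i j))
    (hfree : AreFree (fun z => φ z)
      (Sum.elim (fun q : Fin d × Fin d => ({x q.1 q.2} : Set A))
        (Sum.elim (fun q : Fin d × Fin d => ({y q.1 q.2} : Set A))
          (fun _ : Unit => (B : Set A))))) :
    let C : Matrix (Fin d) (Fin d) A := Matrix.of fun i j => circ (x i j) (y i j)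
    let S₁ : Matrix (Fin d) (Fin d) A :=
      ((Real.sqrt (2 * d) : ℂ))⁻¹ • (C + star C)
    let S₂ : Matrix (Fin d) (Fin d) A :=
      (Complex.I * (Real.sqrt (2 * d) : ℂ))⁻¹ • (C - star C)
    star S₁ = S₁ ∧ star S₂ = S₂ ∧
    SemicircMoments (fun X => phid φ X) S₁ ∧
    SemicircMoments (fun X => phid φ X) S₂ ∧
    AreFree (fun X => phid φ X)
      (![{S₁}, {S₂}, {X : Matrix (Fin d) (Fin d) A | ∀ i j, X i j ∈ B}] :
        Fin 3 → Set (Matrix (Fin d) (Fin d) A)) ∧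
    AreFree (fun X => phid φ X)
      (![{C, star C}, {X : Matrix (Fin d) (Fin d) A | ∀ i j, X i j ∈ B}] :
        Fin 2 → Set (Matrix (Fin d) (Fin d) A)) :=
  matrix_of_circulars_is_circular_and_free_general hd φ hφ1 B.toSubalgebra x y
    hx_sa hx_sc hy_sa hy_sc hfree
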